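/- Let Q be a loop with the automorphic inverse property and let α : Q → Q be any map. Then α is an endomorphism of Q with J∘α central (a J-central endomorphism) if and only if the map α̂ : x ↦ x+α(x) is an endomorphism of Q whose image is contained in Z(Q). Moreover, in that case {x ∈ Q : α(x) = 0} = {x ∈ Q : α̂(x) = x}. -/

import Mathlib

/-- A loop: a quasigroup with a two-sided neutral element. -/
structure Loop (Q : Type) where
  add : Q → Q → Q
  zero : Q
  addLeftBij : ∀ x, Function.Bijective fun y => add x y
  addRightBij : ∀ x, Function.Bijective fun y => add y x
  zero_add : ∀ x, add zero x = x
  add_zero : ∀ x, add x zero = x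

namespace Loop

/-- The center of a loop: elements commuting and associating with everything. -/
def center {Q : Type} (L : Loop Q) : Set Q :=
  {z | (∀ x, L.add z x = L.add x z) ∧
       (∀ x y, L.add z (L.add x y) = L.add (L.add z x) y) ∧
       (∀ x y, L.add x (L.add z y) = L.add (L.add x z) y) ∧
       (∀ x y, L.add x (L.add y z) = L.add (L.add x y) z)}

/-- A map `α` is central if `Z(Q) + α(x) = Z(Q) + x` for every `x`. -/
def IsCentral {Q : Type} (L : Loop Q) (α : Q → Q) : Prop :=
  ∀ x, (fun z => L.add z (α x)) '' L.center = (fun z => L.add z x) '' L.center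

/-- Automorphism of a loop: a bijective map respecting the operation. -/
def IsAut {Q : Type} (L : Loop Q) (f : Q → Q) : Prop :=
  Function.Bijective f ∧ ∀ x y, f (L.add x y) = L.add (f x) (f y)

/-- `neg` provides two-sided inverses for the loop. -/
def IsTwoSidedInv {Q : Type} (L : Loop Q) (neg : Q → Q) : Prop :=
  ∀ x, L.add x (neg x) = L.zero ∧ L.add (neg x) x = L.zero

/-- Commutative Moufang loop: commutative and satisfying the Moufang identity. -/
def IsCommMoufang {Q : Type} (L : Loop Q) : Prop :=
  (∀ x y, L.add x y = L.add y x) ∧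
  (∀ x y z, L.add x (L.add y (L.add x z)) = L.add (L.add (L.add x y) x) z)

end Loop

open Loop in
/-- In a loop with the automorphic inverse property, `α` is a J-central
endomorphism iff `α̂ = id + α` is an endomorphism into the center; moreover the
kernel of `α` is the fixed-point set of `α̂`. -/
theorem stmt {Q : Type} (L : Loop Q) (neg : Q → Q) (hneg : L.IsTwoSidedInv neg)
    (haip : ∀ x y, neg (L.add x y) = L.add (neg x) (neg y))
    (α : Q → Q) :
    (((∀ x y, α (L.add x y) = L.add (α x) (α y)) ∧
        L.IsCentral (fun x => neg (α x))) ↔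
      ((∀ x y, L.add (L.add x y) (α (L.add x y)) =
          L.add (L.add x (α x)) (L.add y (α y))) ∧
       (∀ x, L.add x (α x) ∈ L.center))) ∧
    (((∀ x y, α (L.add x y) = L.add (α x) (α y)) ∧
        L.IsCentral (fun x => neg (α x))) →
      {x | α x = L.zero} = {x | L.add x (α x) = x}) := by
  have lc : ∀ a b c, L.add a b = L.add a c → b = c := fun a b c h => (L.addLeftBij a).1 h
  have rc : ∀ a b c, L.add b a = L.add c a → b = c := fun a b c h => (L.addRightBij a).1 h
  have nn : ∀ x, neg (neg x) = x := fun x =>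
    lc (neg x) _ _ ((hneg (neg x)).1.trans (hneg x).2.symm)
  have ninj : ∀ x y, neg x = neg y → x = y := fun x y h => by rw [← nn x, h, nn]
  have zadd : ∀ z ∈ L.center, ∀ w ∈ L.center, L.add z w ∈ L.center := by
    rintro z ⟨z1, z2, z3, z4⟩ w ⟨w1, w2, w3, w4⟩
    refine ⟨fun x => ?_, fun x y => ?_, fun x y => ?_, fun x y => ?_⟩
    · rw [← z2, w1, z2, z1, ← z3]
    · rw [← z2, w2, z2, z2]
    · rw [← z2, z3, w3, ← z3]
    · rw [w4, w4, z4, w4]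
  have zneg : ∀ z ∈ L.center, neg z ∈ L.center := by
    rintro z ⟨z1, z2, z3, z4⟩
    refine ⟨fun x => ?_, fun x y => ?_, fun x y => ?_, fun x y => ?_⟩ <;> apply ninj <;>
      simp only [haip, nn]
    · exact z1 _
    · exact z2 _ _
    · exact z3 _ _
    · exact z4 _ _
  have zzero : L.zero ∈ L.center := by
    refine ⟨fun x => ?_, fun x y => ?_, fun x y => ?_, fun x y => ?_⟩ <;>
      simp only [L.zero_add, L.add_zero]
  have mid : ∀ z ∈ L.center, ∀ w ∈ L.center, ∀ a b,
      L.add (L.add z a) (L.add w b) = L.add (L.add z w) (L.add a b) := by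
    rintro z ⟨z1, z2, z3, z4⟩ w ⟨w1, w2, w3, w4⟩ a b
    rw [← z2, w3, ← w1, ← w2, z2]
  -- decomposition
  have dec : ∀ x, L.add x (α x) ∈ L.center → x = L.add (L.add x (α x)) (neg (α x)) := by
    intro x hz
    apply rc (α x)
    rw [← hz.2.1, (hneg _).2, L.add_zero]
  refine ⟨⟨?_, ?_⟩, ?_⟩
  · rintro ⟨he, hc⟩
    have hz : ∀ x, L.add x (α x) ∈ L.center := by
      intro x
      have hx : x ∈ (fun z => L.add z x) '' L.center := ⟨L.zero, zzero, L.zero_add x⟩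
      rw [← hc x] at hx
      obtain ⟨z, hz, h⟩ := hx
      have h' : L.add z (neg (α x)) = x := h
      have : L.add x (α x) = z := by
        calc L.add x (α x) = L.add (L.add z (neg (α x))) (α x) := by rw [h']
          _ = z := by rw [← hz.2.1, (hneg _).2, L.add_zero]
      rw [this]; exact hz
    refine ⟨fun x y => ?_, hz⟩
    apply rc (neg (α (L.add x y)))
    rw [← dec _ (hz _), he, haip, ← mid _ (hz x) _ (hz y), ← dec x (hz x), ← dec y (hz y)]
  · rintro ⟨he, hz⟩
    constructor
    · intro x y
      apply ninj
      apply lc (L.add (L.add x y) (α (L.add x y)))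
      rw [← dec _ (hz _), he, haip, ← mid _ (hz x) _ (hz y), ← dec x (hz x), ← dec y (hz y)]
    · intro x
      ext t
      constructor
      · rintro ⟨w, hw, rfl⟩
        refine ⟨L.add w (neg (L.add x (α x))), zadd _ hw _ (zneg _ (hz x)), ?_⟩
        change L.add (L.add w _) x = L.add w (neg (α x))
        rw [← hw.2.1]
        congr 1
        calc L.add (neg (L.add x (α x))) x
            = L.add (neg (L.add x (α x))) (L.add (L.add x (α x)) (neg (α x))) := by
              rw [← dec x (hz x)]
          _ = neg (α x) := by rw [(zneg _ (hz x)).2.1, (hneg _).2, L.zero_add]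
      · rintro ⟨w, hw, rfl⟩
        refine ⟨L.add w (L.add x (α x)), zadd _ hw _ (hz x), ?_⟩
        change L.add (L.add w _) (neg (α x)) = L.add w x
        rw [← hw.2.1, ← dec x (hz x)]
  · intro _
    ext x
    constructor
    · intro h
      change L.add x (α x) = x
      rw [show α x = L.zero from h, L.add_zero]
    · intro h
      exact lc x _ _ (Eq.trans h (L.add_zero x).symm)
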